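/- Let X and Y be Hermitian n×n matrices and Z = X + Y, with eigenvalues of each matrix ordered decreasingly. Then for all indices with n ≥ t ≥ j ≥ 1, λ_t(Z) ≤ λ_j(X) + λ_{t-j+1}(Y), and for n ≥ j ≥ t ≥ 1, λ_t(Z) ≥ λ_j(X) + λ_{t-j+n}(Y). -/

import Mathlib

/-!
An orthonormal eigenbasis turns `re ⟪x, T x⟫` into a sum of the numbers `‖⟪b i, x⟫‖ ^ 2` weighted
by the eigenvalues. If the number of eigenvalues of `T + S` above `r + s` were greater than the
number of eigenvalues of `T` above `r` plus the number of those of `S` above `s`, then by a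
dimension count some nonzero `x` would be orthogonal to the eigenvectors of `T` above `r`, to those
of `S` above `s` and to those of `T + S` not above `r + s`; the quadratic form of `T + S` at `x`
would be both at most and greater than `(r + s) * ‖x‖ ^ 2`. For decreasing eigenvalues this count is
the upper Weyl inequality, and the lower one is the upper one for the sum `T = (T + S) + (-S)`.
-/

open Finset Module RCLike
open scoped InnerProductSpace

lemma lt_card_filter_lt_iff_of_antitone {α : Type*} [LinearOrder α] {n : ℕ} {f : Fin n → α}
    (hf : Antitone f) (a : α) (k : Fin n) : (k : ℕ) < #{i | a < f i} ↔ a < f k := by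
  constructor
  · contrapose!
    intro hk
    calc #{i | a < f i} ≤ #(Iio k) := card_le_card fun i hi =>
          mem_Iio.2 (hf.reflect_lt (hk.trans_lt (mem_filter.1 hi).2))
      _ = k := Fin.card_Iio k
  · intro hk
    calc (k : ℕ) < #(Iic k) := by simp only [Fin.card_Iic, Nat.lt_succ_self]
      _ ≤ #{i | a < f i} := card_le_card fun i hi =>
          mem_filter.2 ⟨mem_univ i, hk.trans_le (hf (mem_Iic.1 hi))⟩

section InnerProductSpace

variable {𝕜 E ι κ τ : Type*} [RCLike 𝕜] [NormedAddCommGroup E] [InnerProductSpace 𝕜 E]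
  [Fintype ι] [Fintype κ] [Fintype τ]

lemma exists_ne_zero_forall_inner_eq_zero (v : ι → E) (hv : Fintype.card ι < finrank 𝕜 E) :
    ∃ x : E, x ≠ 0 ∧ ∀ i, ⟪v i, x⟫_𝕜 = 0 := by
  have : FiniteDimensional 𝕜 (Submodule.span 𝕜 (Set.range v)) :=
    FiniteDimensional.span_of_finite 𝕜 (Set.finite_range v)
  have hspan : Submodule.span 𝕜 (Set.range v) ≠ ⊤ := by
    intro htop
    have hcard := finrank_range_le_card (R := 𝕜) v
    rw [Set.finrank, htop, finrank_top] at hcard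
    exact hv.not_ge hcard
  obtain ⟨x, hx, hx0⟩ :=
    Submodule.exists_mem_ne_zero_of_ne_bot (mt Submodule.orthogonal_eq_bot_iff.1 hspan)
  exact ⟨x, hx0, fun i => hx _ (Submodule.subset_span (Set.mem_range_self i))⟩

/-- `IsEigenbasis T b μ` says that the orthonormal basis `b` diagonalizes `T`, with real eigenvalues
`μ` listed with multiplicity. -/
def IsEigenbasis (T : E →ₗ[𝕜] E) (b : OrthonormalBasis ι 𝕜 E) (μ : ι → ℝ) : Prop :=
  ∀ i, T (b i) = (μ i : 𝕜) • b i

namespace IsEigenbasis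

variable {T S : E →ₗ[𝕜] E} {a : OrthonormalBasis ι 𝕜 E} {b : OrthonormalBasis κ 𝕜 E}
  {c : OrthonormalBasis τ 𝕜 E} {μ : ι → ℝ} {ν : κ → ℝ} {ξ : τ → ℝ}

lemma neg (hT : IsEigenbasis T a μ) : IsEigenbasis (-T) a (-μ) := fun i => by
  simp only [LinearMap.neg_apply, hT i, Pi.neg_apply, ofReal_neg, neg_smul]

lemma reindex (hT : IsEigenbasis T a μ) (e : κ ≃ ι) :
    IsEigenbasis T (a.reindex e.symm) (μ ∘ e) := fun i => by
  simpa only [OrthonormalBasis.reindex_apply, Equiv.symm_symm, Function.comp_apply] using hT (e i)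

lemma re_inner_apply_self (hT : IsEigenbasis T a μ) (x : E) :
    re ⟪x, T x⟫_𝕜 = ∑ i, μ i * ‖⟪a i, x⟫_𝕜‖ ^ 2 := by
  have hTx : T x = ∑ i, (⟪a i, x⟫_𝕜 * μ i) • a i := by
    conv_lhs => rw [← a.sum_repr' x]
    simp only [map_sum, map_smul, hT _, smul_smul]
  rw [hTx, inner_sum, map_sum]
  refine sum_congr rfl fun i _ => ?_
  rw [inner_smul_right, mul_right_comm, re_mul_ofReal, inner_mul_symm_re_eq_norm, norm_mul,
    norm_inner_symm x, ← sq, mul_comm]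

lemma re_inner_apply_self_le (hT : IsEigenbasis T a μ) {r : ℝ} {x : E}
    (hx : ∀ i, r < μ i → ⟪a i, x⟫_𝕜 = 0) : re ⟪x, T x⟫_𝕜 ≤ r * ‖x‖ ^ 2 := by
  rw [hT.re_inner_apply_self, ← a.sum_sq_norm_inner_right x, mul_sum]
  refine sum_le_sum fun i _ => ?_
  obtain hi | hi := le_or_gt (μ i) r
  · gcongr
  · simp [hx i hi]

lemma lt_re_inner_apply_self (hT : IsEigenbasis T a μ) {r : ℝ} {x : E} (hx0 : x ≠ 0)
    (hx : ∀ i, μ i ≤ r → ⟪a i, x⟫_𝕜 = 0) : r * ‖x‖ ^ 2 < re ⟪x, T x⟫_𝕜 := by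
  obtain ⟨k, hk⟩ : ∃ k, ⟪a k, x⟫_𝕜 ≠ 0 := by
    contrapose! hx0
    rw [← norm_eq_zero, ← sq_eq_zero_iff, ← a.sum_sq_norm_inner_right x]
    simp [hx0]
  rw [hT.re_inner_apply_self, ← a.sum_sq_norm_inner_right x, mul_sum]
  refine sum_lt_sum (fun i _ => ?_) ⟨k, mem_univ k, ?_⟩
  · obtain hi | hi := le_or_gt (μ i) r
    · simp [hx i hi]
    · gcongr
  · have hrk : r < μ k := not_le.1 (mt (hx k) hk)
    gcongr

theorem card_add_lt_le_add_card_lt (hT : IsEigenbasis T a μ) (hS : IsEigenbasis S b ν)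
    (hTS : IsEigenbasis (T + S) c ξ) (r s : ℝ) :
    #{k | r + s < ξ k} ≤ #{i | r < μ i} + #{j | s < ν j} := by
  by_contra! hcard
  let v : {i // r < μ i} ⊕ {j // s < ν j} ⊕ {k // ξ k ≤ r + s} → E :=
    Sum.elim (fun i => a i) (Sum.elim (fun j => b j) (fun k => c k))
  have hdim : Fintype.card ({i // r < μ i} ⊕ {j // s < ν j} ⊕ {k // ξ k ≤ r + s}) <
      finrank 𝕜 E := by
    have hcompl := card_filter_add_card_filter_not (s := univ) fun k => r + s < ξ k
    simp only [not_lt, card_univ] at hcompl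
    rw [finrank_eq_card_basis c.toBasis]
    simp only [Fintype.card_sum, Fintype.card_subtype]
    omega
  obtain ⟨x, hx0, hx⟩ := exists_ne_zero_forall_inner_eq_zero v hdim
  have hTx := hT.re_inner_apply_self_le fun i hi => hx (.inl ⟨i, hi⟩)
  have hSx := hS.re_inner_apply_self_le fun j hj => hx (.inr (.inl ⟨j, hj⟩))
  have hTSx := hTS.lt_re_inner_apply_self hx0 fun k hk => hx (.inr (.inr ⟨k, hk⟩))
  rw [LinearMap.add_apply, inner_add_right, map_add] at hTSx
  linarith

end IsEigenbasis

section Weyl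

variable {n : ℕ} {T S : E →ₗ[𝕜] E} {a b c : OrthonormalBasis (Fin n) 𝕜 E} {μ ν ξ : Fin n → ℝ}

theorem IsEigenbasis.apply_le_add (hT : IsEigenbasis T a μ) (hS : IsEigenbasis S b ν)
    (hTS : IsEigenbasis (T + S) c ξ) (hμ : Antitone μ) (hν : Antitone ν) (hξ : Antitone ξ)
    {i j k : Fin n} (hijk : (i + j : ℕ) ≤ k) : ξ k ≤ μ i + ν j := by
  contrapose! hijk
  calc (k : ℕ) < #{l | μ i + ν j < ξ l} := (lt_card_filter_lt_iff_of_antitone hξ _ k).2 hijk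
    _ ≤ #{l | μ i < μ l} + #{l | ν j < ν l} := hT.card_add_lt_le_add_card_lt hS hTS _ _
    _ ≤ i + j := add_le_add
        (not_lt.1 <| (lt_card_filter_lt_iff_of_antitone hμ _ i).not.2 (lt_irrefl _))
        (not_lt.1 <| (lt_card_filter_lt_iff_of_antitone hν _ j).not.2 (lt_irrefl _))

theorem IsEigenbasis.add_le_apply (hT : IsEigenbasis T a μ) (hS : IsEigenbasis S b ν)
    (hTS : IsEigenbasis (T + S) c ξ) (hμ : Antitone μ) (hν : Antitone ν) (hξ : Antitone ξ)
    {i j k : Fin n} (hijk : k + n ≤ (i + j + 1 : ℕ)) : μ i + ν j ≤ ξ k := by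
  have hT' : IsEigenbasis (T + S + -S) a μ := by rwa [add_neg_cancel_right]
  have hν' : Antitone (-ν ∘ Fin.rev) := fun _ _ h => neg_le_neg (hν (Fin.rev_le_rev.2 h))
  have hμξν := hTS.apply_le_add (hS.neg.reindex Fin.revPerm) hT' hξ hν' hμ
    (i := k) (j := j.rev) (k := i) (by rw [Fin.val_rev]; omega)
  simp only [Function.comp_apply, Pi.neg_apply, Fin.revPerm_apply, Fin.rev_rev] at hμξν
  linarith

end Weyl

end InnerProductSpace

section Matrix

variable {𝕜 m : Type*} [RCLike 𝕜] [Fintype m] [DecidableEq m] {A : Matrix m m 𝕜}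

lemma isEigenbasis_eigenvectorBasis (hA : A.IsHermitian) :
    IsEigenbasis (Matrix.toEuclideanLin A) hA.eigenvectorBasis hA.eigenvalues := fun i => by
  apply WithLp.ofLp_injective 2
  simpa using! hA.mulVec_eigenvectorBasis i

end Matrix

theorem stmt_5_general {𝕜 m : Type*} [RCLike 𝕜] [Fintype m] [DecidableEq m] {n : ℕ}
    (X Y : Matrix m m 𝕜) (hX : X.IsHermitian) (hY : Y.IsHermitian) (hZ : (X + Y).IsHermitian)
    (μ ν ξ : Fin n → ℝ) (hμ : Antitone μ) (hν : Antitone ν) (hξ : Antitone ξ)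
    (eμ : ∃ e : Fin n ≃ m, μ = hX.eigenvalues ∘ e)
    (eν : ∃ e : Fin n ≃ m, ν = hY.eigenvalues ∘ e)
    (eξ : ∃ e : Fin n ≃ m, ξ = hZ.eigenvalues ∘ e) :
    (∀ i j k : Fin n, (i + j : ℕ) ≤ k → ξ k ≤ μ i + ν j) ∧
      (∀ i j k : Fin n, k + n ≤ (i + j + 1 : ℕ) → μ i + ν j ≤ ξ k) := by
  obtain ⟨e, rfl⟩ := eμ
  obtain ⟨f, rfl⟩ := eν
  obtain ⟨g, rfl⟩ := eξ
  have hX' := (isEigenbasis_eigenvectorBasis hX).reindex e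
  have hY' := (isEigenbasis_eigenvectorBasis hY).reindex f
  have hZ' := (isEigenbasis_eigenvectorBasis hZ).reindex g
  rw [map_add] at hZ'
  exact ⟨fun _ _ _ => hX'.apply_le_add hY' hZ' hμ hν hξ,
    fun _ _ _ => hX'.add_le_apply hY' hZ' hμ hν hξ⟩

/-- **Weyl's inequalities** for the eigenvalues of a sum of Hermitian matrices.
`μ`, `ν`, `ξ` are the eigenvalues of `X`, `Y`, `Z = X + Y` in non-increasing order,
indexed by `Fin n` (so the `i`-th largest eigenvalue, 1-based, is the value at index
`i - 1`). -/
theorem stmt_5 {n : ℕ} (X Y : Matrix (Fin n) (Fin n) ℂ)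
    (hX : X.IsHermitian) (hY : Y.IsHermitian) (hZ : (X + Y).IsHermitian)
    (μ ν ξ : Fin n → ℝ) (hμ : Antitone μ) (hν : Antitone ν) (hξ : Antitone ξ)
    (eμ : ∃ e : Equiv.Perm (Fin n), μ = hX.eigenvalues ∘ e)
    (eν : ∃ e : Equiv.Perm (Fin n), ν = hY.eigenvalues ∘ e)
    (eξ : ∃ e : Equiv.Perm (Fin n), ξ = hZ.eigenvalues ∘ e) :
    (∀ (t j : ℕ) (h1 : 1 ≤ j) (h2 : j ≤ t) (h3 : t ≤ n),
        ξ ⟨t - 1, by omega⟩ ≤ μ ⟨j - 1, by omega⟩ + ν ⟨t - j, by omega⟩) ∧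
      (∀ (t j : ℕ) (h1 : 1 ≤ t) (h2 : t ≤ j) (h3 : j ≤ n),
        ξ ⟨t - 1, by omega⟩ ≥ μ ⟨j - 1, by omega⟩ + ν ⟨n - 1 - (j - t), by omega⟩) := by
  obtain ⟨hle, hge⟩ := stmt_5_general X Y hX hY hZ μ ν ξ hμ hν hξ eμ eν eξ
  exact ⟨fun t j h1 h2 h3 => hle _ _ _ (by dsimp only; omega),
    fun t j h1 h2 h3 => hge _ _ _ (by dsimp only; omega)⟩
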